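/- For all integers p1, p2 and every positive integer u, one has H(u;p2,p1+1) = q^{2u} ( H(u;p1,p2) + H(u−1;p1,p2) ). -/

import Mathlib

open Finset

noncomputable section

/-- The field `ℚ(q)` of rational functions over `ℚ`. -/
abbrev F : Type := RatFunc ℚ

/-- The indeterminate `q`. -/
noncomputable def qq : F := RatFunc.X

/-- The quantum integer `[n]` with base `v`: `(v^n - v^(-n))/(v - v⁻¹)`. -/
noncomputable def qint (v : F) (n : ℤ) : F := (v ^ n - v ^ (-n)) / (v - v⁻¹)

/-- The quantum factorial `[m]! = [1][2]⋯[m]` with base `v`. -/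
noncomputable def qfact (v : F) (m : ℕ) : F := ∏ k ∈ range m, qint v ((k : ℤ) + 1)

/-- The quantum binomial coefficient `C_v(n,d) = [n][n-1]⋯[n-d+1]/[d]!` for `d ≥ 0`,
and `0` for `d < 0`. -/
noncomputable def qbinom (v : F) (n d : ℤ) : F :=
  if d < 0 then 0
  else (∏ k ∈ range d.toNat, qint v (n - (k : ℤ))) / qfact v d.toNat

/-- The function `H(u;p1,p2)` of [CLW, (5.9)]. -/
noncomputable def H (u : ℕ) (p1 p2 : ℤ) : F :=
  ∑ c ∈ range (u + 1),
    (let e : ℕ := u - c;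
     qq ^ (2 * (c : ℤ) + 2 * (c : ℤ) * p1 + 2 * (e : ℤ) * p2)
       * qbinom (qq ^ 2) p1 (c : ℤ) * qbinom (qq ^ 2) p2 (e : ℤ))

theorem qq_ne : qq ≠ 0 := RatFunc.X_ne_zero

theorem qq_pow_ne (k : ℕ) (hk : k ≠ 0) : qq ^ k ≠ 1 := by
  intro h
  have h2 : (algebraMap (Polynomial ℚ) F) (Polynomial.X ^ k) = algebraMap (Polynomial ℚ) F 1 := by
    rw [map_pow, RatFunc.algebraMap_X, map_one]; exact h
  have h3 := RatFunc.algebraMap_injective ℚ h2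
  have h4 := congrArg Polynomial.natDegree h3
  simp at h4
  exact hk h4

theorem qsub_ne (m : ℕ) (hm : m ≠ 0) : (qq ^ 2) ^ (m : ℤ) - (qq ^ 2) ^ (-(m : ℤ)) ≠ 0 := by
  intro h
  have h0 : (qq ^ 2) ^ m ≠ 0 := pow_ne_zero _ (pow_ne_zero _ qq_ne)
  rw [zpow_neg, zpow_natCast, sub_eq_zero] at h
  apply qq_pow_ne (4 * m) (by omega)
  have : (qq ^ 2) ^ m * (qq ^ 2) ^ m = 1 := by
    nth_rewrite 1 [h]
    exact inv_mul_cancel₀ h0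
  rw [← this]; ring

theorem qden_ne : (qq ^ 2) - (qq ^ 2)⁻¹ ≠ 0 := by
  have := qsub_ne 1 one_ne_zero
  simpa using this

theorem qint_ne (c : ℕ) : qint (qq ^ 2) ((c : ℤ) + 1) ≠ 0 := by
  have := qsub_ne (c + 1) (by omega)
  push_cast at this
  exact div_ne_zero this qden_ne

theorem qfact_ne (c : ℕ) : qfact (qq ^ 2) c ≠ 0 :=
  Finset.prod_ne_zero_iff.2 fun k _ => qint_ne k

theorem qint_add (n : ℤ) (c : ℕ) : qint (qq ^ 2) (n + 1) =
    (qq ^ 2) ^ ((c : ℤ) + 1) * qint (qq ^ 2) (n - c)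
      + (qq ^ 2) ^ ((c : ℤ) - n) * qint (qq ^ 2) ((c : ℤ) + 1) := by
  have h0 : qq ^ 2 ≠ 0 := pow_ne_zero _ qq_ne
  unfold qint
  rw [mul_div_assoc', mul_div_assoc', ← add_div, mul_sub, mul_sub]
  simp only [← zpow_add₀ h0]
  congr 1
  ring_nf

theorem qbinom_nat (n : ℤ) (c : ℕ) : qbinom (qq ^ 2) n (c : ℤ) =
    (∏ k ∈ range c, qint (qq ^ 2) (n - (k : ℤ))) / qfact (qq ^ 2) c := by
  unfold qbinom
  rw [if_neg (by omega), Int.toNat_natCast]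

theorem qbinom_zero' (n : ℤ) : qbinom (qq ^ 2) n ((0 : ℕ) : ℤ) = 1 := by
  rw [qbinom_nat]; simp [qfact]

theorem qpascal (n : ℤ) (c : ℕ) : qbinom (qq ^ 2) (n + 1) ((c + 1 : ℕ) : ℤ) =
    (qq ^ 2) ^ ((c : ℤ) + 1) * qbinom (qq ^ 2) n ((c + 1 : ℕ) : ℤ)
      + (qq ^ 2) ^ ((c : ℤ) - n) * qbinom (qq ^ 2) n (c : ℤ) := by
  have e1 : qfact (qq ^ 2) (c + 1) = qfact (qq ^ 2) c * qint (qq ^ 2) ((c : ℤ) + 1) := by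
    unfold qfact; rw [prod_range_succ]
  have e2 : ∏ k ∈ range (c + 1), qint (qq ^ 2) (n + 1 - (k : ℤ)) =
      (∏ k ∈ range c, qint (qq ^ 2) (n - (k : ℤ))) * qint (qq ^ 2) (n + 1) := by
    rw [prod_range_succ']
    congr 1
    · refine prod_congr rfl fun k _ => ?_
      congr 1; push_cast; ring
    · simp
  rw [qbinom_nat, qbinom_nat, qbinom_nat, e1, e2, prod_range_succ, qint_add n c]
  have h1 := qfact_ne c
  have h2 := qint_ne c
  generalize qint (qq ^ 2) ((c : ℤ) + 1) = a at *
  generalize qfact (qq ^ 2) c = b at *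
  generalize (qq ^ 2) ^ ((c : ℤ) + 1) = s
  generalize (qq ^ 2) ^ ((c : ℤ) - n) = t
  field_simp

theorem sq_zpow' (k : ℤ) : (qq ^ 2) ^ k = qq ^ (2 * k) := by
  rw [zpow_mul]; rfl

/-- `H(u;p2,p1+1) = q^{2u} (H(u;p1,p2) + H(u−1;p1,p2))` for `u > 0`. -/
theorem H_rec1 (p1 p2 : ℤ) (u : ℕ) (hu : 0 < u) :
    H u p2 (p1 + 1) = qq ^ (2 * (u : ℤ)) * (H u p1 p2 + H (u - 1) p1 p2) := by
  obtain ⟨m, rfl⟩ : ∃ m, u = m + 1 := ⟨u - 1, by omega⟩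
  have hq := qq_ne
  unfold H
  dsimp only
  rw [← Finset.sum_flip, sum_range_succ', sum_range_succ' (n := m + 1), Nat.add_sub_cancel,
    add_right_comm (∑ k ∈ range (m + 1), _) _ (∑ k ∈ range (m + 1), _), ← sum_add_distrib,
    mul_add (qq ^ (2 * ((m + 1 : ℕ) : ℤ))), mul_sum]
  congr 1
  · refine sum_congr rfl fun c hc => ?_
    have hc' : c ≤ m := by have := mem_range.1 hc; omega
    obtain ⟨e, rfl⟩ := Nat.exists_eq_add_of_le hc'
    have e1 : c + e + 1 - (c + 1) = e := by omega
    have e2 : c + e + 1 - e = c + 1 := by omega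
    have e3 : c + e - c = e := by omega
    rw [e1, e2, e3, qpascal, sq_zpow', sq_zpow']
    generalize qbinom (qq ^ 2) p1 ((c + 1 : ℕ) : ℤ) = A
    generalize qbinom (qq ^ 2) p1 (c : ℤ) = B
    generalize qbinom (qq ^ 2) p2 (e : ℤ) = C
    push_cast
    have h1 : qq ^ (2 * (e : ℤ) + 2 * e * p2 + 2 * (c + 1) * (p1 + 1)) * qq ^ (2 * ((c : ℤ) + 1))
      = qq ^ (2 * ((c : ℤ) + e + 1)) * qq ^ (2 * ((c : ℤ) + 1) + 2 * (c + 1) * p1 + 2 * e * p2) := by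
      rw [← zpow_add₀ hq, ← zpow_add₀ hq]; congr 1; ring
    have h2 : qq ^ (2 * (e : ℤ) + 2 * e * p2 + 2 * (c + 1) * (p1 + 1)) * qq ^ (2 * ((c : ℤ) - p1))
      = qq ^ (2 * ((c : ℤ) + e + 1)) * qq ^ (2 * (c : ℤ) + 2 * c * p1 + 2 * e * p2) := by
      rw [← zpow_add₀ hq, ← zpow_add₀ hq]; congr 1; ring
    linear_combination (C * A) * h1 + (C * B) * h2
  · simp only [Nat.sub_zero, Nat.sub_self, qbinom_zero']
    rw [mul_one, mul_one, ← mul_assoc, ← zpow_add₀ hq]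
    congr 2
    push_cast; ring

end
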